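/- Let B be a noetherian normal integral domain graded by an abelian group G, and let H ∈ 𝕋(B). Then: (a) ht(J) = ht(J ∩ B^{(H)}) for every ideal J of B; (b) the map f : Spec B → Spec B^{(H)}, f(P) = P ∩ B^{(H)}, is surjective and satisfies f⁻¹(Spec¹ B^{(H)}) = Spec¹ B; (c) if G is torsion-free and Z (respectively Z') denotes the set of height-1 homogeneous prime ideals of B (respectively of B^{(H)}), then f⁻¹(Z') = Z and the restriction f|_Z : Z → Z' is bijective. -/

import Mathlib

noncomputable section

/-- A derivation is locally nilpotent. -/
def IsLND {R : Type*} [CommRing R] (D : Derivation ℤ R R) : Prop :=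
  ∀ b : R, ∃ n : ℕ, 0 < n ∧ (⇑D)^[n] b = 0

/-- Kernel of a derivation, as a subring. -/
def kerDer {R : Type*} [CommRing R] (D : Derivation ℤ R R) : Subring R where
  carrier := {x | D x = 0}
  one_mem' := by simp
  mul_mem' := by
    intro a b ha hb
    simp only [Set.mem_setOf_eq] at *
    rw [Derivation.leibniz, ha, hb]
    simp
  add_mem' := by
    intro a b ha hb
    simp only [Set.mem_setOf_eq] at *
    rw [map_add, ha, hb, add_zero]
  zero_mem' := by simp
  neg_mem' := by
    intro a ha
    simp only [Set.mem_setOf_eq] at *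
    rw [map_neg, ha, neg_zero]

section Graded

variable {G : Type*} [AddCommGroup G] {B : Type*} [CommRing B]

/-- The Veronese subring `B^{(H)} = ⊕_{i ∈ H} B_i` of a `G`-graded ring,
realized as the subring generated by the homogeneous elements whose degree lies in `H`. -/
def verSub (𝒜 : G → AddSubgroup B) (H : AddSubgroup G) : Subring B :=
  Subring.closure (⋃ i ∈ (H : Set G), (𝒜 i : Set B))

/-- 𝔾(B): the subgroup of G generated by the degrees of nonzero homogeneous elements. -/
def Gsub (𝒜 : G → AddSubgroup B) : AddSubgroup G :=
  AddSubgroup.closure { i : G | 𝒜 i ≠ ⊥ }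

/-- `H ∈ 𝕋(B)`: the quotient `𝔾(B)/(H ∩ 𝔾(B))` is torsion. -/
def Tmem (𝒜 : G → AddSubgroup B) (H : AddSubgroup G) : Prop :=
  ∀ g ∈ Gsub 𝒜, ∃ n : ℕ, 0 < n ∧ n • g ∈ H

/-- A homogeneous derivation of `B`. -/
def IsHomogDer (𝒜 : G → AddSubgroup B) (D : Derivation ℤ B B) : Prop :=
  ∃ d : G, ∀ (i : G) (x : B), x ∈ 𝒜 i → D x ∈ 𝒜 (i + d)

/-- A homogeneous derivation of a graded subring `S` of `B`. -/
def IsHomogDerOn (𝒜 : G → AddSubgroup B) (S : Subring B) (D : Derivation ℤ S S) : Prop :=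
  ∃ d : G, ∀ (i : G) (x : S), (x : B) ∈ 𝒜 i → ((D x : S) : B) ∈ 𝒜 (i + d)

/-- 𝕄̄(B,p): the subgroup of G generated by the degrees i with B_i ⊄ p. -/
def Mbar (𝒜 : G → AddSubgroup B) (p : Ideal B) : AddSubgroup G :=
  AddSubgroup.closure { i : G | ¬ (𝒜 i : Set B) ⊆ (p : Set B) }

/-- A prime ideal of height 1. -/
def heightOne {R : Type*} [CommRing R] (p : Ideal R) : Prop :=
  p.IsPrime ∧ (∃ q : Ideal R, q.IsPrime ∧ q < p) ∧
    ∀ q r : Ideal R, q.IsPrime → r.IsPrime → q < r → r < p → False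

open Classical in
/-- 𝔾̄(B). -/
def Gbar (𝒜 : G → AddSubgroup B) : AddSubgroup G :=
  if ∃ p : Ideal B, heightOne p then ⨅ p : {p : Ideal B // heightOne p}, Mbar 𝒜 p.1
  else Gsub 𝒜

end Graded

/-- The height of an ideal J: the infimum, over the primes p ⊇ J, of the height of p
(the height of a prime being the sup of the lengths of chains of primes ending at p). -/
noncomputable def idealHeight {R : Type*} [CommRing R] (J : Ideal R) : ℕ∞ :=
  ⨅ p : {p : Ideal R // p.IsPrime ∧ J ≤ p},
    Order.height (⟨p.1, p.2.1⟩ : {q : Ideal R // q.IsPrime})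

/-!
Write `R = B^{(H)}`. Along `G → G/H` the grading of `B` becomes a `G/H`-grading with degree-`0`
part `R`, and `H ∈ 𝕋(B)` gives every homogeneous element a power in `R`, so `B` is integral over
`R`. It also satisfies going-down: let `q ⊂ P ∩ R` be a prime of `R`, `r ∈ R \ q` and `r b ∈
qB`. As `r` has degree `0` and `qB` is homogeneous, `r b_k ∈ qB` for each component `b_k` of
`b`, so `b_k` lies in every prime over `q`; then a power of `b_k` lies in `q ⊆ P`, whence `b ∈
P`. Integrality and going-down give (a) and (b). For (c), a torsion-free `G` can be ordered, so
the homogeneous core of a prime `P` is prime; if `P ∩ R` is homogeneous, the core has the same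
contraction as `P`, and incomparability forces them to be equal.
-/

theorem exists_linearOrder_isOrderedCancelAddMonoid (G : Type*) [AddCommGroup G]
    [IsAddTorsionFree G] : ∃ _ : LinearOrder G, IsOrderedCancelAddMonoid G := by
  classical
  let b := Module.Basis.ofVectorSpace ℚ (DivisibleHull G)
  let : LinearOrder (Module.Basis.ofVectorSpaceIndex ℚ (DivisibleHull G)) :=
    linearOrderOfSTO WellOrderingRel
  let coords : G → Lex (Module.Basis.ofVectorSpaceIndex ℚ (DivisibleHull G) →₀ ℚ) :=
    fun g => toLex (b.repr g)
  have coords_injective : Function.Injective coords :=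
    toLex.injective.comp (b.repr.injective.comp DivisibleHull.coe_injective)
  have coords_add (x y : G) : coords (x + y) = coords x + coords y := by
    simp only [coords, DivisibleHull.coe_add, map_add, toLex_add]
  let : LinearOrder G := LinearOrder.lift' coords coords_injective
  exact ⟨inferInstance, Function.Injective.isOrderedCancelAddMonoid coords coords_add Iff.rfl⟩

section GoingDown

variable {R S : Type*} [CommRing R] [CommRing S] [Algebra R S]

theorem hasGoingDown_of_mul_mem_map
    (h : ∀ (p : Ideal R) [p.IsPrime] (Q : Ideal S) [Q.IsPrime], p < Q.under R →
      ∀ r ∉ p, ∀ b, algebraMap R S r * b ∈ p.map (algebraMap R S) → b ∈ Q) :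
    Algebra.HasGoingDown R S := by
  constructor
  intro p _ Q _ hpQ
  let SQ := Localization.AtPrime Q
  suffices hp : (p.map (algebraMap R SQ)).comap (algebraMap R SQ) ≤ p by
    obtain ⟨P, hP, hPp⟩ := (Ideal.comap_map_eq_self_iff_of_isPrime _).mp
      (hp.antisymm Ideal.le_comap_map)
    refine ⟨P.under S, ?_, inferInstance, ⟨by rw [Ideal.under_under, ← hPp]⟩⟩
    exact (Ideal.comap_mono (IsLocalRing.le_maximalIdeal_of_isPrime P)).trans_eq
      Localization.AtPrime.under_maximalIdeal
  intro r hr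
  by_contra hrp
  rw [Ideal.mem_comap, IsScalarTower.algebraMap_eq R S SQ, ← Ideal.map_map, RingHom.comp_apply,
    IsLocalization.algebraMap_mem_map_algebraMap_iff Q.primeCompl] at hr
  obtain ⟨a, haQ, ha⟩ := hr
  exact haQ (h p Q hpQ r hrp a (by rwa [mul_comm]))

variable [Algebra.HasGoingDown R S]

theorem exists_lt_comap_eq_of_lt_comap {P : Ideal S} (hP : P.IsPrime) {q : Ideal R}
    (hq : q.IsPrime) (hqP : q < P.comap (algebraMap R S)) :
    ∃ Q : Ideal S, Q.IsPrime ∧ Q < P ∧ Q.comap (algebraMap R S) = q := by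
  have : P.LiesOver (P.comap (algebraMap R S)) := ⟨rfl⟩
  obtain ⟨Q, hQP, hQ, hQq⟩ := Ideal.exists_ideal_lt_liesOver_of_lt P hqP
  exact ⟨Q, hQ, hQP, hQq.over.symm⟩

variable [Algebra.IsIntegral R S]

theorem heightOne_comap_iff {P : Ideal S} (hP : P.IsPrime) :
    heightOne (P.comap (algebraMap R S)) ↔ heightOne P := by
  constructor
  · rintro ⟨_, ⟨q, hq, hqP⟩, no_chain⟩
    obtain ⟨Q, hQ, hQP, -⟩ := exists_lt_comap_eq_of_lt_comap hP hq hqP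
    exact ⟨hP, ⟨Q, hQ, hQP⟩, fun Q₁ Q₂ hQ₁ hQ₂ h₁₂ h₂ =>
      no_chain _ _ (hQ₁.comap _) (hQ₂.comap _) (Ideal.IsIntegral.comap_lt_comap h₁₂)
        (Ideal.IsIntegral.comap_lt_comap h₂)⟩
  · rintro ⟨_, ⟨Q, hQ, hQP⟩, no_chain⟩
    refine ⟨hP.comap _, ⟨_, hQ.comap _, Ideal.IsIntegral.comap_lt_comap hQP⟩,
      fun q₁ q₂ hq₁ hq₂ h₁₂ h₂ => ?_⟩
    obtain ⟨Q₂, hQ₂, hQ₂P, rfl⟩ := exists_lt_comap_eq_of_lt_comap hP hq₂ h₂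
    obtain ⟨Q₁, hQ₁, hQ₁₂, rfl⟩ := exists_lt_comap_eq_of_lt_comap hQ₂ hq₁ h₁₂
    exact no_chain Q₁ Q₂ hQ₁ hQ₂ hQ₁₂ hQ₂P

theorem height_comap {P : Ideal S} (hP : P.IsPrime) :
    Order.height (⟨P.comap (algebraMap R S), hP.comap _⟩ : {q : Ideal R // q.IsPrime}) =
      Order.height (⟨P, hP⟩ : {Q : Ideal S // Q.IsPrime}) := by
  let f : {Q : Ideal S // Q.IsPrime} → {q : Ideal R // q.IsPrime} :=
    fun Q => ⟨Q.1.comap (algebraMap R S), Q.2.comap _⟩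
  have f_strictMono : StrictMono f := fun Q₁ Q₂ h => by
    have := Q₁.2
    exact Ideal.IsIntegral.comap_lt_comap (R := R) (show Q₁.1 < Q₂.1 from h)
  refine (Order.height_eq_of_strictMono f f_strictMono (fun Q q hqQ => ?_) ⟨P, hP⟩).symm
  obtain ⟨Q', hQ', hQ'Q, hQ'q⟩ := exists_lt_comap_eq_of_lt_comap Q.2 q.2 hqQ
  exact ⟨⟨Q', hQ'⟩, hQ'Q, Subtype.ext hQ'q⟩

theorem idealHeight_comap (J : Ideal S) :
    idealHeight (J.comap (algebraMap R S)) = idealHeight J := by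
  apply le_antisymm
  · refine le_iInf fun P => ?_
    rw [← height_comap (R := R) P.2.1]
    exact iInf_le_of_le ⟨P.1.comap (algebraMap R S), P.2.1.comap _, Ideal.comap_mono P.2.2⟩ le_rfl
  · refine le_iInf fun ⟨p, hp, hJp⟩ => ?_
    obtain ⟨P, hJP, hP, rfl⟩ := Ideal.exists_ideal_over_prime_of_isIntegral p J hJp
    rw [height_comap hP]
    exact iInf_le_of_le ⟨P, hP, hJP⟩ le_rfl

end GoingDown

section GradeZero

variable {K : Type*} [DecidableEq K] {R S : Type*} [CommRing R] [CommRing S] [Algebra R S]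
  (ℬ : K → AddSubgroup S)

theorem isIntegral_of_isHomogeneousElem_pow_mem [DirectSum.Decomposition ℬ]
    (hpow : ∀ b, SetLike.IsHomogeneousElem ℬ b → ∃ n > 0, b ^ n ∈ (algebraMap R S).range) :
    Algebra.IsIntegral R S := by
  refine ⟨fun b => ?_⟩
  classical
  rw [← DirectSum.sum_support_decompose ℬ b]
  refine IsIntegral.sum _ fun k _ => ?_
  obtain ⟨n, hn, r, hr⟩ := hpow _ (SetLike.isHomogeneousElem_coe (DirectSum.decompose ℬ b k))
  exact .of_pow hn (hr ▸ isIntegral_algebraMap)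

theorem hasGoingDown_of_isHomogeneousElem_pow_mem [FaithfulSMul R S] [AddMonoid K] [GradedRing ℬ]
    (hzero : ∀ r, algebraMap R S r ∈ ℬ 0)
    (hpow : ∀ b, SetLike.IsHomogeneousElem ℬ b → ∃ n > 0, b ^ n ∈ (algebraMap R S).range) :
    Algebra.HasGoingDown R S := by
  have := isIntegral_of_isHomogeneousElem_pow_mem ℬ hpow
  refine hasGoingDown_of_mul_mem_map fun q _ P _ hqP r hrq b hrb => ?_
  obtain ⟨⟨Q, hQ, hQq⟩⟩ := q.nonempty_primesOver (S := S)
  have map_homogeneous : (q.map (algebraMap R S)).IsHomogeneous ℬ :=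
    Ideal.homogeneous_span ℬ _ (by rintro _ ⟨s, -, rfl⟩; exact ⟨0, hzero s⟩)
  have map_le : q.map (algebraMap R S) ≤ Q := Ideal.map_le_iff_le_comap.mpr hQq.over.le
  have component_mem (k : K) : (DirectSum.decompose ℬ b k : S) ∈ P := by
    set c := (DirectSum.decompose ℬ b k : S)
    have hrc : algebraMap R S r * c ∈ Q := by
      rw [← DirectSum.coe_decompose_mul_of_left_mem_zero ℬ (hzero r)]
      exact map_le (map_homogeneous k hrb)
    have hc : c ∈ Q := (hQ.mem_or_mem hrc).resolve_left fun hr => hrq (hQq.over ▸ hr)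
    obtain ⟨n, hn, s, hs⟩ := hpow c (SetLike.isHomogeneousElem_coe _)
    have hsq : s ∈ q := by
      rw [hQq.over, Ideal.under, Ideal.mem_comap, hs]
      exact Ideal.pow_mem_of_mem Q hc n hn
    exact ‹P.IsPrime›.mem_of_pow_mem n (hs ▸ hqP.le hsq)
  classical
  rw [← DirectSum.sum_support_decompose ℬ b]
  exact sum_mem fun k _ => component_mem k

end GradeZero

section Coarsening

variable {G K B : Type*} [AddMonoid G] [AddMonoid K] [Ring B]
  (𝒜 : G → AddSubgroup B) (φ : G →+ K)

/-- The `K`-grading induced by a `G`-grading along `φ : G →+ K`: the component of degree `k` is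
the sum of the components whose degree maps to `k`. -/
def coarsen (k : K) : AddSubgroup B :=
  ⨆ i : {i // φ i = k}, 𝒜 i

variable {𝒜} in
theorem mem_coarsen_of_mem {i : G} {x : B} (hx : x ∈ 𝒜 i) : x ∈ coarsen 𝒜 φ (φ i) :=
  le_iSup (fun j : {j // φ j = φ i} => 𝒜 j) ⟨i, rfl⟩ hx

variable {φ} in
@[elab_as_elim]
theorem coarsen_induction {k : K} {motive : ∀ x, x ∈ coarsen 𝒜 φ k → Prop}
    (mem : ∀ i x (hi : φ i = k) (hx : x ∈ 𝒜 i), motive x (hi ▸ mem_coarsen_of_mem φ hx))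
    (zero : motive 0 (zero_mem _))
    (add : ∀ x y hx hy, motive x hx → motive y hy → motive (x + y) (add_mem hx hy)) {x : B}
    (hx : x ∈ coarsen 𝒜 φ k) : motive x hx :=
  AddSubgroup.iSup_induction' (fun i : {i // φ i = k} => 𝒜 i) (fun i x hx => mem i x i.2 hx) zero
    add hx

instance coarsen_gradedMonoid [SetLike.GradedMonoid 𝒜] : SetLike.GradedMonoid (coarsen 𝒜 φ) where
  one_mem := by simpa using mem_coarsen_of_mem φ (SetLike.GradedOne.one_mem (A := 𝒜))
  mul_mem k l x y hx hy := by
    induction hx using coarsen_induction with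
    | zero => simp
    | add x₁ x₂ _ _ h₁ h₂ => simpa only [add_mul] using add_mem h₁ h₂
    | mem i x hi hx =>
      induction hy using coarsen_induction with
      | zero => simp
      | add y₁ y₂ _ _ h₁ h₂ => simpa only [mul_add] using add_mem h₁ h₂
      | mem j y hj hy =>
        rw [← hi, ← hj, ← map_add]
        exact mem_coarsen_of_mem φ (SetLike.mul_mem_graded hx hy)

variable [DecidableEq G]

theorem coe_decompose_mem_coarsen [DirectSum.Decomposition 𝒜] {k : K} {x : B}
    (hx : x ∈ coarsen 𝒜 φ k) (i : G) :
    (DirectSum.decompose 𝒜 x i : B) ∈ coarsen 𝒜 φ k := by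
  induction hx using coarsen_induction with
  | zero => simp
  | add y z _ _ hy hz =>
    simpa only [DirectSum.decompose_add, DirectSum.add_apply, AddSubgroup.coe_add]
      using add_mem hy hz
  | mem j y hj hy =>
    rw [DirectSum.decompose_of_mem 𝒜 hy, DirectSum.coe_of_apply]
    split_ifs
    · exact hj ▸ mem_coarsen_of_mem φ hy
    · exact zero_mem _

variable [DecidableEq K]

/-- The decomposition map of `coarsen 𝒜 φ`, which regroups the `𝒜`-components of an element by
the image of their degree; it makes `coarsen 𝒜 φ` a grading. -/
def decomposeCoarsen [DirectSum.Decomposition 𝒜] : B →+ DirectSum K fun k => coarsen 𝒜 φ k :=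
  (DirectSum.toAddMonoid fun i => (DirectSum.of (fun k => coarsen 𝒜 φ k) (φ i)).comp
    (AddSubgroup.inclusion fun _ => mem_coarsen_of_mem φ)).comp
      (DirectSum.decomposeAddEquiv 𝒜).toAddMonoidHom

theorem decomposeCoarsen_of_mem [DirectSum.Decomposition 𝒜] {i : G} {x : B} (hx : x ∈ 𝒜 i) :
    decomposeCoarsen 𝒜 φ x =
      DirectSum.of (fun k => coarsen 𝒜 φ k) (φ i) ⟨x, mem_coarsen_of_mem φ hx⟩ := by
  change DirectSum.toAddMonoid _ (DirectSum.decompose 𝒜 x) = _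
  rw [DirectSum.decompose_of_mem 𝒜 hx, DirectSum.toAddMonoid_of]
  rfl

theorem decomposeCoarsen_of_mem_coarsen [DirectSum.Decomposition 𝒜] {k : K} {x : B}
    (hx : x ∈ coarsen 𝒜 φ k) :
    decomposeCoarsen 𝒜 φ x = DirectSum.of (fun k => coarsen 𝒜 φ k) k ⟨x, hx⟩ := by
  induction hx using coarsen_induction with
  | zero => exact (map_zero _).trans (map_zero _).symm
  | add y z _ _ hy hz =>
    rw [map_add, hy, hz, ← map_add]
    rfl
  | mem i y hi hy =>
    cases hi
    exact decomposeCoarsen_of_mem 𝒜 φ hy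

instance coarsen_decomposition [DirectSum.Decomposition 𝒜] :
    DirectSum.Decomposition (coarsen 𝒜 φ) :=
  .ofAddHom (coarsen 𝒜 φ) (decomposeCoarsen 𝒜 φ)
    (by
      ext x
      induction x using DirectSum.Decomposition.inductionOn 𝒜 with
      | zero => simp
      | homogeneous x => simp [decomposeCoarsen_of_mem 𝒜 φ x.2]
      | add x y hx hy => simp only [map_add, hx, hy])
    (by
      ext k x : 2
      simp [decomposeCoarsen_of_mem_coarsen 𝒜 φ x.2])

instance coarsen_gradedRing [GradedRing 𝒜] : GradedRing (coarsen 𝒜 φ) where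

end Coarsening

section Veronese

variable {G : Type*} [AddCommGroup G] {B : Type*} [CommRing B] (𝒜 : G → AddSubgroup B)
  (H : AddSubgroup G)

variable {𝒜 H} in
theorem mem_verSub_of_mem {i : G} (hi : i ∈ H) {x : B} (hx : x ∈ 𝒜 i) : x ∈ verSub 𝒜 H :=
  Subring.subset_closure (Set.mem_iUnion₂_of_mem hi hx)

theorem mem_verSub_iff_mem_coarsen [SetLike.GradedMonoid 𝒜] {x : B} :
    x ∈ verSub 𝒜 H ↔ x ∈ coarsen 𝒜 (QuotientAddGroup.mk' H) 0 := by
  constructor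
  · suffices verSub 𝒜 H ≤ SetLike.GradeZero.subring (coarsen 𝒜 (QuotientAddGroup.mk' H)) from
      fun hx => this hx
    refine Subring.closure_le.mpr (Set.iUnion₂_subset fun i hi y hy => ?_)
    change y ∈ coarsen 𝒜 (QuotientAddGroup.mk' H) 0
    rw [← (QuotientAddGroup.eq_zero_iff i).mpr hi]
    exact mem_coarsen_of_mem (QuotientAddGroup.mk' H) hy
  · intro hx
    induction hx using coarsen_induction with
    | zero => exact zero_mem _
    | add x y _ _ hx hy => exact add_mem hx hy
    | mem i x hi hx => exact mem_verSub_of_mem ((QuotientAddGroup.eq_zero_iff i).mp hi) hx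

variable {𝒜 H}

theorem exists_pow_mem_verSub_of_mem_coarsen [SetLike.GradedMonoid 𝒜] (hH : Tmem 𝒜 H)
    {k : G ⧸ H} {x : B} (hx : x ∈ coarsen 𝒜 (QuotientAddGroup.mk' H) k) :
    ∃ n > 0, x ^ n ∈ verSub 𝒜 H := by
  by_cases hk : ∃ i, QuotientAddGroup.mk' H i = k ∧ 𝒜 i ≠ ⊥
  · obtain ⟨i, rfl, hi⟩ := hk
    obtain ⟨n, hn, hni⟩ := hH i (AddSubgroup.subset_closure hi)
    refine ⟨n, hn, (mem_verSub_iff_mem_coarsen 𝒜 H).mpr ?_⟩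
    rw [← (QuotientAddGroup.eq_zero_iff (n • i)).mpr hni]
    exact SetLike.pow_mem_graded n hx
  · push Not at hk
    have hx0 : x = 0 := by
      have : coarsen 𝒜 (QuotientAddGroup.mk' H) k = ⊥ := iSup_eq_bot.mpr fun i => hk i i.2
      simpa [this] using hx
    exact ⟨1, one_pos, by simp [hx0, zero_mem]⟩

theorem exists_pow_mem_verSub [SetLike.GradedMonoid 𝒜] (hH : Tmem 𝒜 H) {x : B}
    (hx : SetLike.IsHomogeneousElem 𝒜 x) : ∃ n > 0, x ^ n ∈ verSub 𝒜 H :=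
  let ⟨_, hi⟩ := hx
  exists_pow_mem_verSub_of_mem_coarsen hH (mem_coarsen_of_mem (QuotientAddGroup.mk' H) hi)

variable [DecidableEq G] [GradedRing 𝒜]

theorem coe_decompose_mem_verSub {x : B} (hx : x ∈ verSub 𝒜 H) (i : G) :
    (DirectSum.decompose 𝒜 x i : B) ∈ verSub 𝒜 H := by
  rw [mem_verSub_iff_mem_coarsen] at hx ⊢
  exact coe_decompose_mem_coarsen 𝒜 _ hx i

theorem verSub_isIntegral (hH : Tmem 𝒜 H) : Algebra.IsIntegral (verSub 𝒜 H) B :=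
  isIntegral_of_isHomogeneousElem_pow_mem 𝒜 fun _ hb =>
    let ⟨n, hn, hbn⟩ := exists_pow_mem_verSub hH hb
    ⟨n, hn, ⟨_, hbn⟩, rfl⟩

theorem verSub_hasGoingDown (hH : Tmem 𝒜 H) : Algebra.HasGoingDown (verSub 𝒜 H) B := by
  classical
  refine hasGoingDown_of_isHomogeneousElem_pow_mem (coarsen 𝒜 (QuotientAddGroup.mk' H))
    (fun r => (mem_verSub_iff_mem_coarsen 𝒜 H).mp r.2) fun b ⟨k, hb⟩ => ?_
  obtain ⟨n, hn, hbn⟩ := exists_pow_mem_verSub_of_mem_coarsen hH hb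
  exact ⟨n, hn, ⟨_, hbn⟩, rfl⟩

end Veronese

section HomogeneousPrimes

variable {G : Type*} [AddCommGroup G] [DecidableEq G] {B : Type*} [CommRing B]
  {𝒜 : G → AddSubgroup B} [GradedRing 𝒜]

theorem eq_span_homogeneous_iff_isHomogeneous {P : Ideal B} :
    P = Ideal.span {x | x ∈ P ∧ ∃ i, x ∈ 𝒜 i} ↔ P.IsHomogeneous 𝒜 := by
  constructor
  · intro hP
    rw [hP]
    exact Ideal.homogeneous_span 𝒜 _ fun x hx => hx.2
  · intro hP
    refine le_antisymm (fun x hx => ?_) (Ideal.span_le.mpr fun x hx => hx.1)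
    classical
    rw [← DirectSum.sum_support_decompose 𝒜 x]
    exact sum_mem fun i _ => Ideal.subset_span ⟨hP i hx, i, SetLike.coe_mem _⟩

theorem isPrime_homogeneousCore [IsAddTorsionFree G] {P : Ideal B} (hP : P.IsPrime) :
    (P.homogeneousCore 𝒜).toIdeal.IsPrime := by
  obtain ⟨order, _⟩ := exists_linearOrder_isOrderedCancelAddMonoid G
  obtain rfl : ‹DecidableEq G› = order.toDecidableEq := Subsingleton.elim _ _
  exact hP.homogeneousCore

variable {H : AddSubgroup G}

theorem comap_verSub_eq_span_of_isHomogeneous {P : Ideal B} (hP : P.IsHomogeneous 𝒜) :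
    P.comap (verSub 𝒜 H).subtype =
      Ideal.span {x | x ∈ P.comap (verSub 𝒜 H).subtype ∧ ∃ i, (x : B) ∈ 𝒜 i} := by
  refine le_antisymm (fun x hx => ?_) (Ideal.span_le.mpr fun x hx => hx.1)
  classical
  have sum_components : ∑ i ∈ (DirectSum.decompose 𝒜 (x : B)).support,
      (⟨_, coe_decompose_mem_verSub x.2 i⟩ : verSub 𝒜 H) = x := by
    ext
    simpa only [AddSubmonoidClass.coe_finsetSum] using
      DirectSum.sum_support_decompose 𝒜 (x : B)
  rw [← sum_components]
  exact sum_mem fun i _ => Ideal.subset_span ⟨hP i hx, i, SetLike.coe_mem _⟩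

theorem isHomogeneous_of_comap_verSub_eq_span [IsAddTorsionFree G] (hH : Tmem 𝒜 H) {P : Ideal B}
    (hP : P.IsPrime) (hspan : P.comap (verSub 𝒜 H).subtype =
      Ideal.span {x | x ∈ P.comap (verSub 𝒜 H).subtype ∧ ∃ i, (x : B) ∈ 𝒜 i}) :
    P.IsHomogeneous 𝒜 := by
  let Q := (P.homogeneousCore 𝒜).toIdeal
  have hQ : Q.IsPrime := isPrime_homogeneousCore hP
  have comap_le : P.comap (verSub 𝒜 H).subtype ≤ Q.comap (verSub 𝒜 H).subtype := by
    rw [hspan, Ideal.span_le]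
    rintro x ⟨hxP, hx⟩
    exact Ideal.mem_homogeneousCore_of_homogeneous_of_mem hx hxP
  have := verSub_isIntegral hH
  have hQP : Q = P := (Ideal.toIdeal_homogeneousCore_le 𝒜 P).eq_of_not_lt fun hlt =>
    (Ideal.IsIntegral.comap_lt_comap (R := verSub 𝒜 H) hlt).not_ge comap_le
  exact hQP ▸ HomogeneousIdeal.isHomogeneous _

theorem le_of_comap_verSub_le (hH : Tmem 𝒜 H) {P₁ P₂ : Ideal B} (hP₁ : P₁.IsHomogeneous 𝒜)
    (hP₂ : P₂.IsPrime)
    (hle : P₁.comap (verSub 𝒜 H).subtype ≤ P₂.comap (verSub 𝒜 H).subtype) : P₁ ≤ P₂ := by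
  rw [eq_span_homogeneous_iff_isHomogeneous.mpr hP₁, Ideal.span_le]
  rintro x ⟨hxP₁, hx⟩
  obtain ⟨n, hn, hxn⟩ := exists_pow_mem_verSub hH hx
  have hxnP₂ : (⟨x ^ n, hxn⟩ : verSub 𝒜 H) ∈ P₂.comap (verSub 𝒜 H).subtype :=
    hle (Ideal.pow_mem_of_mem P₁ hxP₁ n hn)
  exact hP₂.mem_of_pow_mem n hxnP₂

theorem exists_isPrime_comap_verSub_eq (hH : Tmem 𝒜 H) {q : Ideal (verSub 𝒜 H)}
    (hq : q.IsPrime) : ∃ P : Ideal B, P.IsPrime ∧ P.comap (verSub 𝒜 H).subtype = q := by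
  have := verSub_isIntegral hH
  obtain ⟨⟨P, hP, hPq⟩⟩ := q.nonempty_primesOver (S := B)
  exact ⟨P, hP, hPq.over.symm⟩

end HomogeneousPrimes

theorem veronese_spec_map_general
    {G : Type*} [AddCommGroup G] [DecidableEq G]
    {B : Type*} [CommRing B]
    (𝒜 : G → AddSubgroup B) [GradedRing 𝒜]
    (H : AddSubgroup G) (hH : Tmem 𝒜 H) :
    (∀ J : Ideal B, idealHeight J = idealHeight (J.comap (verSub 𝒜 H).subtype)) ∧
    ((∀ q : Ideal (verSub 𝒜 H), q.IsPrime →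
        ∃ P : Ideal B, P.IsPrime ∧ P.comap (verSub 𝒜 H).subtype = q) ∧
      (∀ P : Ideal B, P.IsPrime →
        (heightOne (P.comap (verSub 𝒜 H).subtype) ↔ heightOne P))) ∧
    ((∀ (g : G) (n : ℕ), 0 < n → n • g = 0 → g = 0) →
      (∀ P : Ideal B, P.IsPrime →
        ((heightOne (P.comap (verSub 𝒜 H).subtype) ∧
          P.comap (verSub 𝒜 H).subtype
            = Ideal.span { x : (verSub 𝒜 H) | x ∈ P.comap (verSub 𝒜 H).subtype ∧
                ∃ i, (x : B) ∈ 𝒜 i }) ↔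
          (heightOne P ∧ P = Ideal.span { x : B | x ∈ P ∧ ∃ i, x ∈ 𝒜 i }))) ∧
      (∀ P₁ P₂ : Ideal B,
        (heightOne P₁ ∧ P₁ = Ideal.span { x : B | x ∈ P₁ ∧ ∃ i, x ∈ 𝒜 i }) →
        (heightOne P₂ ∧ P₂ = Ideal.span { x : B | x ∈ P₂ ∧ ∃ i, x ∈ 𝒜 i }) →
        P₁.comap (verSub 𝒜 H).subtype = P₂.comap (verSub 𝒜 H).subtype → P₁ = P₂) ∧
      (∀ q : Ideal (verSub 𝒜 H),
        (heightOne q ∧ q = Ideal.span { x : (verSub 𝒜 H) | x ∈ q ∧ ∃ i, (x : B) ∈ 𝒜 i }) →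
        ∃ P : Ideal B,
          (heightOne P ∧ P = Ideal.span { x : B | x ∈ P ∧ ∃ i, x ∈ 𝒜 i }) ∧
          P.comap (verSub 𝒜 H).subtype = q)) := by
  have := verSub_isIntegral hH
  have := verSub_hasGoingDown hH
  refine ⟨fun J => (idealHeight_comap J).symm, ⟨fun q => exists_isPrime_comap_verSub_eq hH,
    fun P => heightOne_comap_iff (R := verSub 𝒜 H)⟩, fun hG => ?_⟩
  have : IsAddTorsionFree G := .of_not_isOfFinAddOrder fun g hg0 hg => by
    obtain ⟨n, hn, hng⟩ := isOfFinAddOrder_iff_nsmul_eq_zero.mp hg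
    exact hg0 (hG g n hn hng)
  simp only [eq_span_homogeneous_iff_isHomogeneous (𝒜 := 𝒜)]
  have preimage (P : Ideal B) (hP : P.IsPrime) := and_congr
    (heightOne_comap_iff (R := verSub 𝒜 H) hP) ⟨isHomogeneous_of_comap_verSub_eq_span hH hP,
      comap_verSub_eq_span_of_isHomogeneous⟩
  refine ⟨preimage, fun P₁ P₂ ⟨hP₁, hP₁'⟩ ⟨hP₂, hP₂'⟩ heq => ?_, fun q hq => ?_⟩
  · exact (le_of_comap_verSub_le hH hP₁' hP₂.1 heq.le).antisymm
      (le_of_comap_verSub_le hH hP₂' hP₁.1 heq.ge)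
  · obtain ⟨P, hP, rfl⟩ := exists_isPrime_comap_verSub_eq hH hq.1.1
    exact ⟨P, (preimage P hP).mp hq, rfl⟩

/-- Let B be a noetherian normal domain graded by an abelian group G and H ∈ 𝕋(B).
Let f : Spec B → Spec B^{(H)} be P ↦ P ∩ B^{(H)}.  Then:
(a) ht(J) = ht(J ∩ B^{(H)}) for every ideal J of B;
(b) f is surjective and f⁻¹(Spec¹ B^{(H)}) = Spec¹ B;
(c) if G is torsion-free, then, with Z (resp. Z') the set of height-1 homogeneous
    primes of B (resp. of B^{(H)}), f⁻¹(Z') = Z and f|_Z : Z → Z' is bijective. -/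
theorem veronese_spec_map
    {G : Type*} [AddCommGroup G] [DecidableEq G]
    {B : Type*} [CommRing B] [IsDomain B] [IsNoetherianRing B] [IsIntegrallyClosed B]
    (𝒜 : G → AddSubgroup B) [GradedRing 𝒜]
    (H : AddSubgroup G) (hH : Tmem 𝒜 H) :
    (∀ J : Ideal B, idealHeight J = idealHeight (J.comap (verSub 𝒜 H).subtype)) ∧
    ((∀ q : Ideal (verSub 𝒜 H), q.IsPrime →
        ∃ P : Ideal B, P.IsPrime ∧ P.comap (verSub 𝒜 H).subtype = q) ∧
      (∀ P : Ideal B, P.IsPrime →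
        (heightOne (P.comap (verSub 𝒜 H).subtype) ↔ heightOne P))) ∧
    ((∀ (g : G) (n : ℕ), 0 < n → n • g = 0 → g = 0) →
      (∀ P : Ideal B, P.IsPrime →
        ((heightOne (P.comap (verSub 𝒜 H).subtype) ∧
          P.comap (verSub 𝒜 H).subtype
            = Ideal.span { x : (verSub 𝒜 H) | x ∈ P.comap (verSub 𝒜 H).subtype ∧
                ∃ i, (x : B) ∈ 𝒜 i }) ↔
          (heightOne P ∧ P = Ideal.span { x : B | x ∈ P ∧ ∃ i, x ∈ 𝒜 i }))) ∧
      (∀ P₁ P₂ : Ideal B,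
        (heightOne P₁ ∧ P₁ = Ideal.span { x : B | x ∈ P₁ ∧ ∃ i, x ∈ 𝒜 i }) →
        (heightOne P₂ ∧ P₂ = Ideal.span { x : B | x ∈ P₂ ∧ ∃ i, x ∈ 𝒜 i }) →
        P₁.comap (verSub 𝒜 H).subtype = P₂.comap (verSub 𝒜 H).subtype → P₁ = P₂) ∧
      (∀ q : Ideal (verSub 𝒜 H),
        (heightOne q ∧ q = Ideal.span { x : (verSub 𝒜 H) | x ∈ q ∧ ∃ i, (x : B) ∈ 𝒜 i }) →
        ∃ P : Ideal B,
          (heightOne P ∧ P = Ideal.span { x : B | x ∈ P ∧ ∃ i, x ∈ 𝒜 i }) ∧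
          P.comap (verSub 𝒜 H).subtype = q)) :=
  veronese_spec_map_general 𝒜 H hH
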